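/- Let μ ≥ 0, q > 0, and let v : ℝⁿ → ℝᵈ be continuous. Define Φ(E) = inf { Σ_j (diam D_j)^μ (diam v(D_j))^q : E ⊂ ⋃_j D_j, D_j compact }. If Φ(E) = 0 for a set E ⊂ ℝⁿ, then H^μ(E ∩ v^{-1}(y)) = 0 for H^q-almost all y ∈ ℝᵈ. -/

import Mathlib

open MeasureTheory Set
open scoped ENNReal

/-- The set function `Φ(E) = inf Σ_j (diam D_j)^μ (diam v(D_j))^q`, the infimum being taken
over all countable covers of `E` by compact sets `D_j`. -/
noncomputable def Phi {n d : ℕ} (μ q : ℝ)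
    (v : EuclideanSpace ℝ (Fin n) → EuclideanSpace ℝ (Fin d))
    (E : Set (EuclideanSpace ℝ (Fin n))) : ℝ≥0∞ :=
  ⨅ (D : ℕ → Set (EuclideanSpace ℝ (Fin n))) (_ : ∀ j, IsCompact (D j))
    (_ : E ⊆ ⋃ j, D j),
    ∑' j, EMetric.diam (D j) ^ μ * EMetric.diam (v '' D j) ^ q

/-!
The theorem follows from a weighted Borel–Cantelli lemma: if `∑ c_j (diam A_j)^q < ∞`, then
`∑ c_j 1_{A_j}(y) < ∞` for `H^q`-almost every `y`. Choose covers `(D i j)_j` of `E` with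
`∑_j (diam D i j)^μ (diam v(D i j))^q ≤ 2^{-i}` and apply this to all the sets `v(D i j)` at once,
with weights `(diam D i j)^μ`. For almost every `y` the sums `∑_{j : y ∈ v(D i j)} (diam D i j)^μ`
are then summable in `i`, so they tend to `0`; and the `i`-th of them belongs to a cover of
`E ∩ v⁻¹(y)`.

For the Borel–Cantelli lemma, the `A_j` may be assumed to have diameter in `(0, 1]`: countably many
points form a null set, and the `A_j` of diameter greater than `1` have finite total weight. Replace
each `A_j` by boundedly many dyadic cubes of comparable diameter. For `θ > 0`, let `I_θ` consist of
the cubes at which the total weight of a cube and its ancestors first exceeds `θ`. It covers every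
point whose cubes have infinite total weight. A cube of weight `C` belongs to `I_θ` for a set of `θ`
of length at most `C`, so `∑_{Q ∈ I_θ} (diam Q)^q` is integrable in `θ` over `(0, ∞)`, and hence
arbitrarily small for suitable `θ`.
-/

section Covers

variable {X ι : Type*} [EMetricSpace X] [MeasurableSpace X] [BorelSpace X] [Countable ι]

lemma hausdorffMeasure_eq_zero_of_forall_exists_cover {q : ℝ} (hq : 0 ≤ q) {s : Set X}
    (hs : ∀ ε : ℝ≥0∞, ε ≠ 0 → ∃ (I : Set ι) (T : ι → Set X),
      s ⊆ ⋃ i : I, T i ∧ ∑' i : I, Metric.ediam (T i) ^ q ≤ ε) :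
    μH[q] s = 0 := by
  rcases hq.eq_or_lt with rfl | hq
  · obtain ⟨I, T, hsT, hT⟩ := hs 2⁻¹ (by simp)
    have : IsEmpty I := ⟨fun i ↦ absurd ((ENNReal.le_tsum i).trans hT) (by simp)⟩
    simp_all
  · choose I T hsT hT using fun n : ℕ ↦ hs (n : ℝ≥0∞)⁻¹ (by simp)
    have inv_tendsto := ENNReal.tendsto_inv_nat_nhds_zero
    have radius_tendsto :
        Filter.Tendsto (fun n : ℕ ↦ (n : ℝ≥0∞)⁻¹ ^ q⁻¹) Filter.atTop (nhds 0) := by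
      simpa [hq] using inv_tendsto.ennrpow_const q⁻¹
    have ediam_le (n : ℕ) (i : I n) : Metric.ediam (T n i) ≤ (n : ℝ≥0∞)⁻¹ ^ q⁻¹ :=
      (ENNReal.le_rpow_inv_iff hq).2 ((ENNReal.le_tsum i).trans (hT n))
    refine nonpos_iff_eq_zero.1 ?_
    calc μH[q] s
      _ ≤ Filter.liminf (fun n ↦ ∑' i : I n, Metric.ediam (T n i) ^ q) Filter.atTop :=
        Measure.hausdorffMeasure_le_liminf_tsum q s _ radius_tendsto (fun n (i : I n) ↦ T n i)
          (.of_forall ediam_le) (.of_forall hsT)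
      _ ≤ Filter.liminf (fun n : ℕ ↦ (n : ℝ≥0∞)⁻¹) Filter.atTop :=
        Filter.liminf_le_liminf (.of_forall hT)
      _ = 0 := inv_tendsto.liminf_eq

end Covers

section StoppingTime

lemma exists_lt_of_lintegral_ne_top {α : Type*} [MeasurableSpace α] {ν : Measure α}
    (hν : ν univ = ∞) {f : α → ℝ≥0∞} (hf : ∫⁻ x, f x ∂ν ≠ ∞) {ε : ℝ≥0∞} (hε : ε ≠ 0) :
    ∃ x, f x < ε := by
  by_contra! hle
  refine hf (top_unique ?_)
  calc ∞ = ∫⁻ _, ε ∂ν := by rw [lintegral_const, hν, ENNReal.mul_top hε]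
    _ ≤ ∫⁻ x, f x ∂ν := lintegral_mono hle

lemma measurableSet_ofReal_mem_Ico (a b : ℝ≥0∞) :
    MeasurableSet {θ : ℝ | ENNReal.ofReal θ ∈ Ico a b} :=
  ENNReal.measurable_ofReal measurableSet_Ico

lemma volume_restrict_ofReal_mem_Ico_le (a c : ℝ≥0∞) :
    volume.restrict (Ioi 0) {θ : ℝ | ENNReal.ofReal θ ∈ Ico a (a + c)} ≤ c := by
  rw [Measure.restrict_apply (measurableSet_ofReal_mem_Ico a (a + c))]
  rcases eq_or_ne c ∞ with rfl | hc
  · exact le_top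
  rcases eq_or_ne a ∞ with rfl | ha
  · simp
  have subset_Ico : {θ : ℝ | ENNReal.ofReal θ ∈ Ico a (a + c)} ∩ Ioi 0 ⊆
      Ico a.toReal (a.toReal + c.toReal) := by
    rintro θ ⟨⟨hle, hlt⟩, hθ : 0 < θ⟩
    rw [← ENNReal.toReal_add ha hc]
    exact ⟨ENNReal.toReal_le_of_le_ofReal hθ.le hle,
      (ENNReal.ofReal_lt_iff_lt_toReal hθ.le (ENNReal.add_ne_top.2 ⟨ha, hc⟩)).1 hlt⟩
  calc _ ≤ volume (Ico a.toReal (a.toReal + c.toReal)) := measure_mono subset_Ico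
    _ = c := by simp [hc]

lemma exists_tsum_indicator_mem_Ico_lt {α : Type*} [Countable α] (a c w : α → ℝ≥0∞)
    (hcw : ∑' p, c p * w p ≠ ∞) {ε : ℝ≥0∞} (hε : ε ≠ 0) :
    ∃ x ≠ ∞, ∑' p, {p | x ∈ Ico (a p) (a p + c p)}.indicator w p < ε := by
  let J (p : α) : Set ℝ := {θ | ENNReal.ofReal θ ∈ Ico (a p) (a p + c p)}
  have hJ (p : α) : MeasurableSet (J p) := measurableSet_ofReal_mem_Ico _ _
  have lintegral_le :
      ∫⁻ θ in Ioi 0, ∑' p, (J p).indicator (fun _ ↦ w p) θ ≤ ∑' p, c p * w p := by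
    rw [lintegral_tsum fun p ↦ (measurable_const.indicator (hJ p)).aemeasurable]
    gcongr with p
    rw [lintegral_indicator_const (hJ p), mul_comm]
    gcongr
    exact volume_restrict_ofReal_mem_Ico_le _ _
  obtain ⟨θ, hθ⟩ := exists_lt_of_lintegral_ne_top (by simp)
    (ne_top_of_le_ne_top hcw lintegral_le) hε
  exact ⟨ENNReal.ofReal θ, ENNReal.ofReal_ne_top, hθ⟩

lemma exists_mem_Ico_sum_range {f : ℕ → ℝ≥0∞} {x : ℝ≥0∞} (hx : x < ∑' k, f k) :
    ∃ k, x ∈ Ico (∑ l ∈ Finset.range k, f l) (∑ l ∈ Finset.range k, f l + f k) := by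
  classical
  have exists_lt_sum : ∃ N, x < ∑ l ∈ Finset.range N, f l := by
    rwa [ENNReal.tsum_eq_iSup_nat, lt_iSup_iff] at hx
  obtain ⟨k, hk⟩ : ∃ k, Nat.find exists_lt_sum = k + 1 := by
    refine Nat.exists_eq_succ_of_ne_zero fun h ↦ ?_
    simpa [h] using Nat.find_spec exists_lt_sum
  refine ⟨k, not_lt.1 (Nat.find_min exists_lt_sum (hk ▸ k.lt_succ_self)), ?_⟩
  rw [← Finset.sum_range_succ, ← hk]
  exact Nat.find_spec exists_lt_sum

lemma exists_cover_tsum_lt_of_tsum_eq_top {Y M : Type*} [Countable M] {π : ℕ → Y → M}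
    (hπ : ∀ ⦃k l⦄, k ≤ l → (π k).FactorsThrough (π l)) (c w : ℕ × M → ℝ≥0∞)
    (hcw : ∑' p, c p * w p ≠ ∞) {ε : ℝ≥0∞} (hε : ε ≠ 0) :
    ∃ I : Set (ℕ × M), (∀ y, ∑' k, c (k, π k y) = ∞ → ∃ k, (k, π k y) ∈ I) ∧
      ∑' p : I, w p < ε := by
  let ancestorSum (p : ℕ × M) : ℝ≥0∞ :=
    Function.extend (π p.1) (fun y ↦ ∑ l ∈ Finset.range p.1, c (l, π l y)) 0 p.2
  have ancestorSum_apply (k : ℕ) (y : Y) :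
      ancestorSum (k, π k y) = ∑ l ∈ Finset.range k, c (l, π l y) := by
    refine Function.FactorsThrough.extend_apply (f := π k)
      (g := fun y ↦ ∑ l ∈ Finset.range k, c (l, π l y)) (fun y z hyz ↦ ?_) 0 y
    exact Finset.sum_congr rfl fun l hl ↦ by rw [hπ (Finset.mem_range.1 hl).le hyz]
  obtain ⟨x, hx, hlt⟩ := exists_tsum_indicator_mem_Ico_lt ancestorSum c w hcw hε
  refine ⟨{p | x ∈ Ico (ancestorSum p) (ancestorSum p + c p)}, fun y hy ↦ ?_, ?_⟩
  · obtain ⟨k, hk⟩ := exists_mem_Ico_sum_range (hy ▸ hx.lt_top)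
    exact ⟨k, by simpa only [mem_ofPred_eq, ancestorSum_apply] using hk⟩
  · rwa [tsum_subtype]

end StoppingTime

section DyadicCubes

variable {κ : Type*}

/-- The index `⌊2 ^ k y⌋` of the half-open dyadic cube of side length `2 ^ (-k)` in `ℝ ^ κ` that
contains `y`. -/
noncomputable def dyadicIndex (k : ℕ) (y : κ → ℝ) : κ → ℤ := fun i ↦ ⌊(2 : ℝ) ^ k * y i⌋

/-- The half-open dyadic cube `∏ i, [2 ^ (-k) m i, 2 ^ (-k) (m i + 1))` of generation `k = p.1`
and index `m = p.2`. -/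
def dyadicCube (p : ℕ × (κ → ℤ)) : Set (κ → ℝ) := {y | dyadicIndex p.1 y = p.2}

lemma dyadicIndex_factorsThrough ⦃k l : ℕ⦄ (hkl : k ≤ l) :
    (dyadicIndex k : (κ → ℝ) → κ → ℤ).FactorsThrough (dyadicIndex l) := by
  obtain ⟨j, rfl⟩ := Nat.exists_eq_add_of_le hkl
  have dyadicIndex_eq_div (y : κ → ℝ) (i : κ) :
      dyadicIndex k y i = dyadicIndex (k + j) y i / (2 ^ j : ℕ) := by
    rw [dyadicIndex, dyadicIndex, ← Int.floor_div_natCast]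
    congr 1
    rw [Nat.cast_pow, Nat.cast_ofNat, pow_add]
    field_simp
  intro y z hyz
  ext i
  rw [dyadicIndex_eq_div, dyadicIndex_eq_div, hyz]

lemma ennreal_ofReal_half_pow (k : ℕ) : ENNReal.ofReal (2⁻¹ ^ k) = 2⁻¹ ^ k := by
  rw [ENNReal.ofReal_pow (by positivity), ENNReal.ofReal_inv_of_pos two_pos,
    ENNReal.ofReal_ofNat]

variable [Fintype κ]

lemma ediam_dyadicCube_le (p : ℕ × (κ → ℤ)) : Metric.ediam (dyadicCube p) ≤ 2⁻¹ ^ p.1 := by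
  refine Metric.ediam_le fun y hy z hz ↦ edist_pi_le_iff.2 fun i ↦ ?_
  have abs_sub_lt : |2 ^ p.1 * y i - 2 ^ p.1 * z i| < 1 :=
    Int.abs_sub_lt_one_of_floor_eq_floor (congrFun (hy.trans hz.symm) i)
  rw [← mul_sub, abs_mul, abs_of_pos (by positivity)] at abs_sub_lt
  rw [edist_dist, ← ennreal_ofReal_half_pow, Real.dist_eq, inv_pow]
  gcongr
  exact (le_inv_mul_iff₀ (by positivity)).2 abs_sub_lt.le |>.trans_eq (mul_one _)

lemma dyadicIndex_mem_Icc_of_edist_le {k : ℕ} {x y : κ → ℝ} (hxy : edist x y ≤ 2⁻¹ ^ k) (i : κ) :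
    dyadicIndex k y i ∈ Finset.Icc (dyadicIndex k x i - 1) (dyadicIndex k x i + 1) := by
  have abs_sub_le : |x i - y i| ≤ 2⁻¹ ^ k := by
    rw [← Real.dist_eq, ← ENNReal.ofReal_le_ofReal_iff (by positivity), ← edist_dist,
      ennreal_ofReal_half_pow]
    exact (edist_le_pi_edist x y i).trans hxy
  have scaled_abs_sub_le : |2 ^ k * x i - 2 ^ k * y i| ≤ 1 := by
    rw [← mul_sub, abs_mul, abs_of_pos (by positivity)]
    calc 2 ^ k * |x i - y i| ≤ 2 ^ k * 2⁻¹ ^ k := by gcongr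
      _ = 1 := by rw [← mul_pow]; norm_num
  have ⟨_, _⟩ := abs_le.1 scaled_abs_sub_le
  rw [Finset.mem_Icc, sub_le_iff_le_add, dyadicIndex, dyadicIndex, ← Int.floor_add_one,
    ← Int.floor_add_one]
  exact ⟨Int.floor_mono (by linarith), Int.floor_mono (by linarith)⟩

lemma exists_finset_dyadicIndex_mem (k : ℕ) {A : Set (κ → ℝ)}
    (hA : Metric.ediam A ≤ 2⁻¹ ^ k) :
    ∃ T : Finset (κ → ℤ), T.card ≤ 3 ^ Fintype.card κ ∧ ∀ y ∈ A, dyadicIndex k y ∈ T := by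
  classical
  rcases A.eq_empty_or_nonempty with rfl | ⟨x, hx⟩
  · exact ⟨∅, by simp⟩
  refine ⟨Fintype.piFinset fun i ↦ Finset.Icc (dyadicIndex k x i - 1) (dyadicIndex k x i + 1),
    ?_, fun y hy ↦ Fintype.mem_piFinset.2 (dyadicIndex_mem_Icc_of_edist_le
      ((Metric.edist_le_ediam_of_mem hx hy).trans hA))⟩
  have card_Icc (m : ℤ) : (Finset.Icc (m - 1) (m + 1)).card = 3 := by
    rw [Int.card_Icc]
    lia
  simp [Fintype.card_piFinset, card_Icc]

lemma exists_half_pow_near {r : ℝ≥0∞} (hr₀ : r ≠ 0) (hr₁ : r ≤ 1) :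
    ∃ k : ℕ, r ≤ 2⁻¹ ^ k ∧ 2⁻¹ ^ k ≤ 2 * r := by
  lift r to NNReal using ne_top_of_le_ne_top ENNReal.one_ne_top hr₁
  obtain ⟨k, hlt, hle⟩ := exists_nat_pow_near_of_lt_one (x := r) (y := 2⁻¹)
    (by simpa [pos_iff_ne_zero] using hr₀) (by simpa using hr₁) (by simp) two_inv_lt_one
  have coe_half_pow : ((2⁻¹ ^ k : NNReal) : ℝ≥0∞) = 2⁻¹ ^ k := by
    rw [ENNReal.coe_pow, ENNReal.coe_inv two_ne_zero, ENNReal.coe_ofNat]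
  refine ⟨k, ?_, ?_⟩ <;> rw [← coe_half_pow]
  · exact_mod_cast hle
  · rw [pow_succ, ← div_eq_mul_inv, div_lt_iff₀ two_pos, mul_comm] at hlt
    exact_mod_cast hlt.le

lemma exists_dyadicCubes_cover {q : ℝ} (hq : 0 ≤ q) {A : Set (κ → ℝ)}
    (hA : Metric.ediam A ∈ Ioc 0 1) :
    ∃ U : Finset (ℕ × (κ → ℤ)), (∀ y ∈ A, ∃ k, (k, dyadicIndex k y) ∈ U) ∧
      ∑ p ∈ U, ((2⁻¹ : ℝ≥0∞) ^ p.1) ^ q ≤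
        3 ^ Fintype.card κ * 2 ^ q * Metric.ediam A ^ q := by
  obtain ⟨k, hle, hge⟩ := exists_half_pow_near hA.1.ne' hA.2
  obtain ⟨T, hcard, hT⟩ := exists_finset_dyadicIndex_mem k hle
  refine ⟨{k} ×ˢ T, fun y hy ↦ ⟨k, by simpa using hT y hy⟩, ?_⟩
  calc ∑ p ∈ {k} ×ˢ T, ((2⁻¹ : ℝ≥0∞) ^ p.1) ^ q
    _ = T.card * ((2⁻¹ : ℝ≥0∞) ^ k) ^ q := by simp
    _ ≤ 3 ^ Fintype.card κ * (2 * Metric.ediam A) ^ q := by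
      gcongr
      exact_mod_cast hcard
    _ = 3 ^ Fintype.card κ * 2 ^ q * Metric.ediam A ^ q := by
      rw [ENNReal.mul_rpow_of_nonneg _ _ hq, mul_assoc]

end DyadicCubes

section BorelCantelli

variable {ι κ : Type*} [Fintype κ] {q : ℝ}

lemma hausdorffMeasure_setOf_tsum_dyadic_eq_top (hq : 0 ≤ q) (c : ℕ × (κ → ℤ) → ℝ≥0∞)
    (hc : ∑' p, c p * (2⁻¹ ^ p.1) ^ q ≠ ∞) :
    μH[q] {y : κ → ℝ | ∑' k, c (k, dyadicIndex k y) = ∞} = 0 := by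
  refine hausdorffMeasure_eq_zero_of_forall_exists_cover (ι := ℕ × (κ → ℤ)) hq fun ε hε ↦ ?_
  obtain ⟨I, hI, hlt⟩ := exists_cover_tsum_lt_of_tsum_eq_top dyadicIndex_factorsThrough c
    (fun p ↦ (2⁻¹ ^ p.1) ^ q) hc hε
  refine ⟨I, dyadicCube, fun y hy ↦ ?_, le_trans ?_ hlt.le⟩
  · obtain ⟨k, hk⟩ := hI y hy
    exact mem_iUnion.2 ⟨⟨_, hk⟩, rfl⟩
  · gcongr with p
    exact ediam_dyadicCube_le _

lemma hausdorffMeasure_setOf_tsum_indicator_eq_top_of_ediam_mem_Ioc (hq : 0 ≤ q)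
    (A : ι → Set (κ → ℝ)) (hA : ∀ j, Metric.ediam (A j) ∈ Ioc 0 1) (c : ι → ℝ≥0∞)
    (hc : ∑' j, c j * Metric.ediam (A j) ^ q ≠ ∞) :
    μH[q] {y | ∑' j, (A j).indicator (fun _ ↦ c j) y = ∞} = 0 := by
  choose U hU hU_sum using fun j ↦ exists_dyadicCubes_cover hq (hA j)
  let K : ℝ≥0∞ := 3 ^ Fintype.card κ * 2 ^ q
  have hK : K ≠ ∞ := ENNReal.mul_ne_top (by simp) (by simp)
  let C (p : ℕ × (κ → ℤ)) : ℝ≥0∞ := ∑' j, (U j : Set (ℕ × (κ → ℤ))).indicator (fun _ ↦ c j) p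
  have tsum_C_le : ∑' p, C p * (2⁻¹ ^ p.1) ^ q ≤ K * ∑' j, c j * Metric.ediam (A j) ^ q := by
    simp only [C, ← ENNReal.tsum_mul_right, ← ENNReal.tsum_mul_left]
    rw [ENNReal.tsum_comm]
    gcongr with j
    calc ∑' p, (U j : Set (ℕ × (κ → ℤ))).indicator (fun _ ↦ c j) p * (2⁻¹ ^ p.1) ^ q
      _ = ∑ p ∈ U j, c j * (2⁻¹ ^ p.1) ^ q := by
        rw [sum_eq_tsum_indicator]
        simp only [indicator, ite_mul, zero_mul]
      _ ≤ K * (c j * Metric.ediam (A j) ^ q) := by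
        rw [← Finset.mul_sum, mul_left_comm]
        gcongr
        exact hU_sum j
  have tsum_indicator_le (y : κ → ℝ) :
      ∑' j, (A j).indicator (fun _ ↦ c j) y ≤ ∑' k, C (k, dyadicIndex k y) := by
    rw [ENNReal.tsum_comm]
    gcongr with j
    refine indicator_apply_le' (fun hy ↦ ?_) fun _ ↦ zero_le
    obtain ⟨k, hk⟩ := hU j y hy
    calc c j = (U j : Set (ℕ × (κ → ℤ))).indicator (fun _ ↦ c j) (k, dyadicIndex k y) :=
          (indicator_of_mem hk fun _ ↦ c j).symm
      _ ≤ _ := ENNReal.le_tsum k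
  refine measure_mono_null (fun y hy ↦ ?_) (hausdorffMeasure_setOf_tsum_dyadic_eq_top hq C
    (ne_top_of_le_ne_top (ENNReal.mul_ne_top hK hc) tsum_C_le))
  exact top_unique (hy.ge.trans (tsum_indicator_le y))

variable [Countable ι]

lemma hausdorffMeasure_iUnion_of_ediam_eq_zero {X : Type*} [EMetricSpace X] [MeasurableSpace X]
    [BorelSpace X] (hq : 0 < q) (A : ι → Set X) :
    μH[q] (⋃ (j) (_ : Metric.ediam (A j) = 0), A j) = 0 := by
  have := Measure.nullSingletonClass_hausdorff X hq
  exact measure_iUnion_null fun j ↦ measure_iUnion_null fun hj ↦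
    (Metric.ediam_eq_zero_iff.1 hj).measure_zero _

lemma hausdorffMeasure_pi_setOf_tsum_indicator_eq_top (hq : 0 < q) (A : ι → Set (κ → ℝ))
    (c : ι → ℝ≥0∞) (hc : ∑' j, c j * Metric.ediam (A j) ^ q ≠ ∞) :
    μH[q] {y | ∑' j, (A j).indicator (fun _ ↦ c j) y = ∞} = 0 := by
  let J : Set ι := {j | Metric.ediam (A j) ∈ Ioc 0 1}
  have hcJ : ∑' j : J, c j * Metric.ediam (A j) ^ q ≠ ∞ :=
    ne_top_of_le_ne_top hc (ENNReal.tsum_comp_le_tsum_of_injective Subtype.val_injective _)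
  refine measure_mono_null (fun y hy ↦ ?_) (measure_union_null
    (hausdorffMeasure_iUnion_of_ediam_eq_zero hq A)
    (hausdorffMeasure_setOf_tsum_indicator_eq_top_of_ediam_mem_Ioc hq.le (fun j : J ↦ A j)
      (fun j ↦ j.2) (fun j ↦ c j) hcJ))
  refine or_iff_not_imp_left.2 fun hyZ ↦ ?_
  have ediam_ne_zero {j : ι} (hj : y ∈ A j) : Metric.ediam (A j) ≠ 0 := fun h ↦
    hyZ (mem_iUnion₂_of_mem h hj)
  have indicator_le (j : ι) : (A j).indicator (fun _ ↦ c j) y ≤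
      J.indicator (fun j ↦ (A j).indicator (fun _ ↦ c j) y) j +
        c j * Metric.ediam (A j) ^ q := by
    by_cases hj : j ∈ J
    · rw [indicator_of_mem hj]
      exact le_self_add
    · refine indicator_apply_le' (fun hyj ↦ le_add_left (le_mul_of_one_le_right' ?_))
        fun _ ↦ zero_le
      have one_lt : 1 < Metric.ediam (A j) :=
        not_le.1 fun h ↦ hj ⟨pos_iff_ne_zero.2 (ediam_ne_zero hyj), h⟩
      exact ENNReal.one_le_rpow one_lt.le hq
  have top_le := hy.ge.trans (ENNReal.tsum_le_tsum indicator_le)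
  rw [ENNReal.tsum_add, top_le_iff, ENNReal.add_eq_top, or_iff_left hc, ← tsum_subtype] at top_le
  exact top_le

variable {F : Type*} [NormedAddCommGroup F] [NormedSpace ℝ F] [FiniteDimensional ℝ F]
  [MeasurableSpace F] [BorelSpace F]

lemma hausdorffMeasure_setOf_tsum_indicator_eq_top (hq : 0 < q) (A : ι → Set F)
    (c : ι → ℝ≥0∞) (hc : ∑' j, c j * Metric.ediam (A j) ^ q ≠ ∞) :
    μH[q] {y | ∑' j, (A j).indicator (fun _ ↦ c j) y = ∞} = 0 := by
  let e : F ≃L[ℝ] (Fin (Module.finrank ℝ F) → ℝ) :=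
    ContinuousLinearEquiv.ofFinrankEq (by simp)
  let K : ℝ≥0∞ := ‖(e : F →L[ℝ] (Fin (Module.finrank ℝ F) → ℝ))‖₊
  have tsum_image_le : ∑' j, c j * Metric.ediam (e '' A j) ^ q ≤
      K ^ q * ∑' j, c j * Metric.ediam (A j) ^ q := by
    rw [← ENNReal.tsum_mul_left]
    refine ENNReal.tsum_le_tsum fun j ↦ ?_
    rw [mul_left_comm, ← ENNReal.mul_rpow_of_nonneg _ _ hq.le]
    gcongr
    exact e.lipschitz.ediam_image_le (A j)
  have image_null := hausdorffMeasure_pi_setOf_tsum_indicator_eq_top hq (fun j ↦ e '' A j) c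
    (ne_top_of_le_ne_top (ENNReal.mul_ne_top (by simp [K, hq.le]) hc) tsum_image_le)
  have preimage_null := e.antilipschitz.hausdorffMeasure_preimage_le hq.le
    {z | ∑' j, (e '' A j).indicator (fun _ ↦ c j) z = ∞}
  rw [image_null, mul_zero, nonpos_iff_eq_zero] at preimage_null
  simpa only [preimage_ofPred_eq, indicator_image e.injective, Function.comp_def]
    using preimage_null

end BorelCantelli

section LevelSets

variable {X F : Type*}

/-- The set function `Φ` for a map between arbitrary extended metric spaces, with covers by
arbitrary sets instead of compact ones. -/
noncomputable def mixedContent [PseudoEMetricSpace X] [PseudoEMetricSpace F] (μ q : ℝ) (v : X → F)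
    (E : Set X) : ℝ≥0∞ :=
  ⨅ (D : ℕ → Set X) (_ : E ⊆ ⋃ j, D j),
    ∑' j, Metric.ediam (D j) ^ μ * Metric.ediam (v '' D j) ^ q

lemma mixedContent_le_Phi {n d : ℕ} (μ q : ℝ)
    (v : EuclideanSpace ℝ (Fin n) → EuclideanSpace ℝ (Fin d))
    (E : Set (EuclideanSpace ℝ (Fin n))) : mixedContent μ q v E ≤ Phi μ q v E :=
  le_iInf fun D ↦ le_iInf fun _ ↦ le_iInf fun hED ↦ iInf₂_le D hED

lemma exists_covers_tsum_ne_top_of_mixedContent_eq_zero [PseudoEMetricSpace X]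
    [PseudoEMetricSpace F] {μ q : ℝ} {v : X → F} {E : Set X} (hE : mixedContent μ q v E = 0) :
    ∃ D : ℕ × ℕ → Set X, (∀ i, E ⊆ ⋃ j, D (i, j)) ∧
      ∑' p, Metric.ediam (D p) ^ μ * Metric.ediam (v '' D p) ^ q ≠ ∞ := by
  have exists_cover (i : ℕ) : ∃ D : ℕ → Set X, E ⊆ ⋃ j, D j ∧
      ∑' j, Metric.ediam (D j) ^ μ * Metric.ediam (v '' D j) ^ q < 2⁻¹ ^ i := by
    have : mixedContent μ q v E < 2⁻¹ ^ i := by simp [hE, pos_iff_ne_zero]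
    simpa only [mixedContent, iInf_lt_iff, exists_prop] using this
  choose D hED hD using exists_cover
  refine ⟨fun p ↦ D p.1 p.2, hED, ne_top_of_le_ne_top (b := ∑' i : ℕ, 2⁻¹ ^ i) ?_ ?_⟩
  · simp [ENNReal.tsum_geometric]
  · rw [ENNReal.tsum_prod']
    exact ENNReal.tsum_le_tsum fun i ↦ (hD i).le

variable [EMetricSpace X] [MeasurableSpace X] [BorelSpace X]

lemma hausdorffMeasure_inter_preimage_singleton_eq_zero {μ : ℝ} (hμ : 0 ≤ μ) {v : X → F}
    {E : Set X} {D : ℕ × ℕ → Set X} (hED : ∀ i, E ⊆ ⋃ j, D (i, j)) {y : F}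
    (hy : ∑' p, (v '' D p).indicator (fun _ ↦ Metric.ediam (D p) ^ μ) y ≠ ∞) :
    μH[μ] (E ∩ v ⁻¹' {y}) = 0 := by
  refine hausdorffMeasure_eq_zero_of_forall_exists_cover (ι := ℕ) hμ fun ε hε ↦ ?_
  rw [ENNReal.tsum_prod'] at hy
  obtain ⟨i, hi⟩ := ((ENNReal.tendsto_atTop_zero_of_tsum_ne_top hy).eventually_lt_const
    (pos_iff_ne_zero.2 hε)).exists
  refine ⟨{j | y ∈ v '' D (i, j)}, fun j ↦ D (i, j), ?_, ?_⟩
  · rintro x ⟨hxE, hxy⟩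
    obtain ⟨j, hj⟩ := mem_iUnion.1 (hED i hxE)
    exact mem_iUnion.2 ⟨⟨j, x, hj, hxy⟩, hj⟩
  · rw [tsum_subtype {j | y ∈ v '' D (i, j)} fun j ↦ Metric.ediam (D (i, j)) ^ μ]
    exact hi.le

theorem hausdorff_level_zero_of_Phi_zero_general [NormedAddCommGroup F] [NormedSpace ℝ F]
    [FiniteDimensional ℝ F] [MeasurableSpace F] [BorelSpace F] {μ q : ℝ} (hμ : 0 ≤ μ) (hq : 0 < q)
    {v : X → F} {E : Set X} (hE : mixedContent μ q v E = 0) :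
    ∀ᵐ y ∂(μH[q] : Measure F), μH[μ] (E ∩ v ⁻¹' {y}) = 0 := by
  obtain ⟨D, hED, hD⟩ := exists_covers_tsum_ne_top_of_mixedContent_eq_zero hE
  have ae_ne_top := measure_eq_zero_iff_ae_notMem.1
    (hausdorffMeasure_setOf_tsum_indicator_eq_top hq (fun p ↦ v '' D p) _ hD)
  filter_upwards [ae_ne_top] with y hy
  exact hausdorffMeasure_inter_preimage_singleton_eq_zero hμ hED hy

end LevelSets

/-- If `Φ(E) = 0`, then `H^μ(E ∩ v⁻¹(y)) = 0` for `H^q`-almost all `y`. -/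
theorem hausdorff_level_zero_of_Phi_zero {n d : ℕ} (μ q : ℝ) (hμ : 0 ≤ μ) (hq : 0 < q)
    (v : EuclideanSpace ℝ (Fin n) → EuclideanSpace ℝ (Fin d)) (hv : Continuous v)
    (E : Set (EuclideanSpace ℝ (Fin n))) (hE : Phi μ q v E = 0) :
    ∀ᵐ y ∂(μH[q] : Measure (EuclideanSpace ℝ (Fin d))),
      μH[μ] (E ∩ v ⁻¹' {y}) = 0 :=
  hausdorff_level_zero_of_Phi_zero_general hμ hq
    (nonpos_iff_eq_zero.1 ((mixedContent_le_Phi μ q v E).trans_eq hE))
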